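/- For a ≥ b ≥ c > 0, the surface area of the hemiellipsoid z = c√(1 − x²/a² − y²/b²) (the upper half of the ellipsoid x²/a² + y²/b² + z²/c² = 1) equals (2π b² c²/a²) · F₁(2; 1/2, 1/2; 3/2; 1 − b²/a², 1 − c²/a²). -/

import Mathlib

open Real MeasureTheory

/-- Pochhammer symbol (rising factorial) on the reals. -/
noncomputable def poch (a : ℝ) (n : ℕ) : ℝ := (ascPochhammer ℝ n).eval a

/-- Appell's first hypergeometric function `F₁(a; b, c; d; x, y)`. -/
noncomputable def appellF1 (a b c d x y : ℝ) : ℝ :=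
  ∑' p : ℕ × ℕ, poch a (p.1 + p.2) * poch b p.1 * poch c p.2 *
      x ^ p.1 * y ^ p.2 /
    (poch d (p.1 + p.2) * Nat.factorial p.1 * Nat.factorial p.2)

/-!
The Gauss map turns an integral over the ellipse below the surface into one over the open upper
hemisphere. If the normal is `n = (sin θ, cos θ sin φ, cos θ cos φ)`, the area element becomes
`a² b² c² / (a² n₁² + b² n₂² + c² n₃²)² * cos θ dθ dφ`. Since `n₁² = 1 - n₂² - n₃²`, the quadratic
form equals `a² (1 - (x n₂² + y n₃²))` with `x = 1 - b² / a²` and `y = 1 - c² / a²`, and the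
binomial series of exponent `-2`, expanded in powers of `x n₂²` and `y n₃²`, can be integrated term
by term: the moments of `n₂²` and `n₃²` over the hemisphere turn it into the Appell series.

To avoid square roots, the Gauss map is computed in gnomonic coordinates: the plane of slopes
`(n₁ / n₃, n₂ / n₃)` is mapped onto the open ellipse on one side and parametrized by the angles on
the other.
-/

open Finset Set

section Pochhammer

lemma poch_zero (a : ℝ) : poch a 0 = 1 := by simp [poch]

lemma poch_succ (a : ℝ) (n : ℕ) : poch a (n + 1) = poch a n * (a + n) := by
  simp [poch, ascPochhammer_succ_eval]

lemma poch_pos {a : ℝ} (ha : 0 < a) (n : ℕ) : 0 < poch a n := ascPochhammer_pos n a ha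

lemma abs_poch_le (a : ℝ) (n : ℕ) : |poch a n| ≤ poch |a| n := by
  induction n with
  | zero => simp [poch_zero]
  | succ n ih =>
    have hfactor : |a + n| ≤ |a| + n := (abs_add_le a n).trans_eq (by simp)
    rw [poch_succ, poch_succ, abs_mul]
    exact mul_le_mul ih hfactor (abs_nonneg _) ((abs_nonneg _).trans ih)

lemma hasSum_poch_div_factorial_mul_pow (a : ℝ) {u : ℝ} (hu : |u| < 1) :
    HasSum (fun n : ℕ ↦ poch a n / n.factorial * u ^ n) (1 / (1 - u) ^ a) := by
  have hball : u ∈ Metric.eball (0 : ℝ) 1 := by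
    simpa [Metric.mem_eball, edist_dist, dist_zero_right] using hu
  have hchoose (n : ℕ) : poch a n / n.factorial = Ring.choose (a + n - 1) n := by
    rw [poch, ← Polynomial.ascPochhammer_smeval_eq_eval,
      ← Ring.factorial_nsmul_multichoose_eq_ascPochhammer, nsmul_eq_mul,
      mul_div_cancel_left₀ _ (by positivity), Ring.choose]
    congr 1
    ring
  have := (Real.one_div_one_sub_rpow_hasFPowerSeriesOnBall_zero a).hasSum hball
  simpa [hchoose, mul_comm] using this

end Pochhammer

section DoubleSeries

lemma sum_antidiagonal_choose_mul_pow (f : ℕ → ℝ) (x y : ℝ) (n : ℕ) :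
    ∑ q ∈ antidiagonal n, f (q.1 + q.2) * (q.1 + q.2).choose q.1 * x ^ q.1 * y ^ q.2 =
      f n * (x + y) ^ n := by
  rw [(Commute.all x y).add_pow', mul_sum]
  refine sum_congr rfl fun q hq ↦ ?_
  rw [mem_antidiagonal.1 hq, nsmul_eq_mul]
  ring

lemma hasSum_choose_mul_pow_mul_pow {f : ℕ → ℝ} {x y s : ℝ}
    (habs : Summable fun n ↦ |f n| * (|x| + |y|) ^ n)
    (hs : HasSum (fun n ↦ f n * (x + y) ^ n) s) :
    HasSum (fun q : ℕ × ℕ ↦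
      f (q.1 + q.2) * (q.1 + q.2).choose q.1 * x ^ q.1 * y ^ q.2) s := by
  have hsummable : Summable fun q : ℕ × ℕ ↦
      f (q.1 + q.2) * (q.1 + q.2).choose q.1 * x ^ q.1 * y ^ q.2 := by
    refine .of_norm ?_
    rw [← HasAntidiagonal.sigmaAntidiagonalEquivProd.summable_iff]
    refine (summable_sigma_of_nonneg fun _ ↦ norm_nonneg _).2
      ⟨fun n ↦ (hasSum_fintype _).summable, habs.congr fun n ↦ ?_⟩
    rw [tsum_fintype, ← sum_antidiagonal_choose_mul_pow (|f ·|), ← Finset.sum_coe_sort]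
    simp
  have hdiagonal : HasSum (fun n ↦ f n * (x + y) ^ n) (∑' q : ℕ × ℕ,
      f (q.1 + q.2) * (q.1 + q.2).choose q.1 * x ^ q.1 * y ^ q.2) := by
    convert (HasAntidiagonal.sigmaAntidiagonalEquivProd.hasSum_iff.2 hsummable.hasSum).sigma
      fun n ↦ hasSum_fintype _ with n
    rw [← sum_antidiagonal_choose_mul_pow, ← Finset.sum_coe_sort]
    rfl
  exact hs.unique hdiagonal ▸ hsummable.hasSum

lemma hasSum_poch_mul_pow_mul_pow (a : ℝ) {x y : ℝ} (hxy : |x| + |y| < 1) :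
    HasSum (fun q : ℕ × ℕ ↦
      poch a (q.1 + q.2) / (q.1.factorial * q.2.factorial) * x ^ q.1 * y ^ q.2)
      (1 / (1 - (x + y)) ^ a) := by
  have habs : |(|x| + |y|)| < 1 := by rwa [abs_of_nonneg (by positivity)]
  convert hasSum_choose_mul_pow_mul_pow (f := fun n ↦ poch a n / n.factorial)
    ((hasSum_poch_div_factorial_mul_pow a habs).summable.abs.congr fun n ↦ ?_)
    (hasSum_poch_div_factorial_mul_pow a ((abs_add_le x y).trans_lt hxy)) using 4 with q
  · rw [Nat.cast_add_choose]
    field_simp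
  · rw [abs_mul, abs_of_nonneg (by positivity : 0 ≤ (|x| + |y|) ^ n)]

end DoubleSeries

section TrigonometricMoments

lemma integral_sin_add_two_mul_cos_half_period (m n : ℕ) :
    ∫ θ in -(π / 2)..π / 2, sin θ ^ (m + 2) * cos θ ^ n =
      (m + 1) / (m + n + 2) * ∫ θ in -(π / 2)..π / 2, sin θ ^ m * cos θ ^ n := by
  have hderiv (θ : ℝ) : HasDerivAt (fun θ ↦ sin θ ^ (m + 1) * cos θ ^ (n + 1))
      ((m + 1) * (sin θ ^ m * cos θ ^ n) - (m + n + 2) * (sin θ ^ (m + 2) * cos θ ^ n)) θ := by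
    refine (((hasDerivAt_sin θ).fun_pow (m + 1)).fun_mul
      ((hasDerivAt_cos θ).fun_pow (n + 1))).congr_deriv ?_
    push_cast [Nat.add_sub_cancel]
    linear_combination (m + 1) * sin θ ^ m * cos θ ^ n * sin_sq_add_cos_sq θ
  have hparts := intervalIntegral.integral_eq_sub_of_hasDerivAt
    (a := -(π / 2)) (b := π / 2) (fun θ _ ↦ hderiv θ)
    (Continuous.intervalIntegrable (by fun_prop) _ _)
  rw [intervalIntegral.integral_sub (Continuous.intervalIntegrable (by fun_prop) _ _)
    (Continuous.intervalIntegrable (by fun_prop) _ _), intervalIntegral.integral_const_mul,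
    intervalIntegral.integral_const_mul] at hparts
  simp only [cos_neg, cos_pi_div_two, zero_pow n.succ_ne_zero, mul_zero, sub_zero] at hparts
  field_simp
  linear_combination -hparts

lemma integral_cos_even_half_period (n : ℕ) :
    ∫ θ in -(π / 2)..π / 2, cos θ ^ (2 * n) = π * poch (1 / 2) n / n.factorial := by
  induction n with
  | zero => simp [poch_zero]
  | succ n ih =>
    rw [Nat.mul_succ, integral_cos_pow, ih, poch_succ, Nat.factorial_succ]
    simp only [cos_neg, cos_pi_div_two]
    push_cast
    field_simp
    ring

lemma integral_cos_odd_half_period (n : ℕ) :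
    ∫ θ in -(π / 2)..π / 2, cos θ ^ (2 * n + 1) = 2 * n.factorial / poch (3 / 2) n := by
  induction n with
  | zero => norm_num [poch_zero]
  | succ n ih =>
    have := poch_pos (show (0 : ℝ) < 3 / 2 by norm_num) n
    rw [show 2 * (n + 1) + 1 = 2 * n + 1 + 2 by ring, integral_cos_pow, ih, poch_succ,
      Nat.factorial_succ]
    simp only [cos_neg, cos_pi_div_two]
    push_cast
    field_simp
    ring

lemma integral_sin_even_mul_cos_even_half_period (m n : ℕ) :
    ∫ θ in -(π / 2)..π / 2, sin θ ^ (2 * m) * cos θ ^ (2 * n) =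
      π * poch (1 / 2) m * poch (1 / 2) n / (m + n).factorial := by
  induction m with
  | zero => simp [integral_cos_even_half_period, poch_zero]
  | succ m ih =>
    rw [Nat.mul_succ, integral_sin_add_two_mul_cos_half_period, ih, poch_succ, Nat.succ_add,
      Nat.factorial_succ]
    push_cast
    field_simp
    ring

end TrigonometricMoments

section AppellIntegral

/-- The parameter domain of the latitude `θ` and longitude `φ` on an open hemisphere, whose point
with parameters `(θ, φ)` is `(sin θ, cos θ sin φ, cos θ cos φ)`. -/
def hemisphereAngles : Set (ℝ × ℝ) := Ioo (-(π / 2)) (π / 2) ×ˢ Ioo (-(π / 2)) (π / 2)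

lemma measurableSet_hemisphereAngles : MeasurableSet hemisphereAngles :=
  measurableSet_Ioo.prod measurableSet_Ioo

lemma integrableOn_hemisphereAngles_of_continuous {f : ℝ × ℝ → ℝ} (hf : Continuous f) :
    IntegrableOn f hemisphereAngles :=
  (hf.continuousOn.integrableOn_compact (isCompact_Icc.prod isCompact_Icc)).mono_set
    (prod_mono Ioo_subset_Icc_self Ioo_subset_Icc_self)

lemma setIntegral_hemisphereAngles_mul (f g : ℝ → ℝ) :
    ∫ p in hemisphereAngles, f p.1 * g p.2 =
      (∫ θ in -(π / 2)..π / 2, f θ) * ∫ φ in -(π / 2)..π / 2, g φ := by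
  have hle : -(π / 2) ≤ π / 2 := by linarith [pi_pos]
  simp only [intervalIntegral.integral_of_le hle, integral_Ioc_eq_integral_Ioo]
  exact setIntegral_prod_mul f g _ _

lemma mul_cos_mul_sin_sq_add_mul_cos_mul_cos_sq_lt_one {x y : ℝ} (hx : x < 1) (hy : y < 1)
    (θ φ : ℝ) : x * (cos θ * sin φ) ^ 2 + y * (cos θ * cos φ) ^ 2 < 1 := by
  set M := max (max x y) 0
  have hxM : x ≤ M := (le_max_left x y).trans (le_max_left _ _)
  have hyM : y ≤ M := (le_max_right x y).trans (le_max_left _ _)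
  have hM : 0 ≤ M := le_max_right _ _
  calc x * (cos θ * sin φ) ^ 2 + y * (cos θ * cos φ) ^ 2
      ≤ M * (cos θ * sin φ) ^ 2 + M * (cos θ * cos φ) ^ 2 := by gcongr
    _ = M * cos θ ^ 2 := by linear_combination M * cos θ ^ 2 * sin_sq_add_cos_sq φ
    _ ≤ M := mul_le_of_le_one_right hM (cos_sq_le_one θ)
    _ < 1 := max_lt (max_lt hx hy) one_pos

/-- The integrand whose integral over the hemisphere is, up to the factor `2 * π`, the term of
index `q` of `appellF1 a (1 / 2) (1 / 2) (3 / 2) x y`. The leading factor `cos p.1` is the area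
density of the sphere in the parameters `p = (θ, φ)`. -/
noncomputable def appellF1Integrand (a x y : ℝ) (q : ℕ × ℕ) (p : ℝ × ℝ) : ℝ :=
  cos p.1 * (poch a (q.1 + q.2) / (q.1.factorial * q.2.factorial) *
    (x * (cos p.1 * sin p.2) ^ 2) ^ q.1 * (y * (cos p.1 * cos p.2) ^ 2) ^ q.2)

lemma integral_appellF1Integrand (a x y : ℝ) (q : ℕ × ℕ) :
    ∫ p in hemisphereAngles, appellF1Integrand a x y q p =
      2 * π * (poch a (q.1 + q.2) * poch (1 / 2) q.1 * poch (1 / 2) q.2 * x ^ q.1 * y ^ q.2 /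
        (poch (3 / 2) (q.1 + q.2) * q.1.factorial * q.2.factorial)) := by
  obtain ⟨m, n⟩ := q
  have hseparate (p : ℝ × ℝ) : appellF1Integrand a x y (m, n) p =
      poch a (m + n) / (m.factorial * n.factorial) * x ^ m * y ^ n *
        (cos p.1 ^ (2 * (m + n) + 1) * (sin p.2 ^ (2 * m) * cos p.2 ^ (2 * n))) := by
    simp only [appellF1Integrand]
    ring
  simp only [hseparate]
  rw [integral_const_mul, setIntegral_hemisphereAngles_mul (cos · ^ (2 * (m + n) + 1))
    (fun φ ↦ sin φ ^ (2 * m) * cos φ ^ (2 * n)), integral_cos_odd_half_period,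
    integral_sin_even_mul_cos_even_half_period]
  have := poch_pos (show (0 : ℝ) < 3 / 2 by norm_num) (m + n)
  field_simp

lemma hasSum_appellF1Integrand (a : ℝ) {x y : ℝ} (hx : |x| < 1) (hy : |y| < 1) (p : ℝ × ℝ) :
    HasSum (appellF1Integrand a x y · p) (cos p.1 *
      (1 / (1 - (x * (cos p.1 * sin p.2) ^ 2 + y * (cos p.1 * cos p.2) ^ 2)) ^ a)) := by
  refine (hasSum_poch_mul_pow_mul_pow a ?_).mul_left _
  rw [abs_mul, abs_mul, abs_of_nonneg (sq_nonneg (cos p.1 * sin p.2)),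
    abs_of_nonneg (sq_nonneg (cos p.1 * cos p.2))]
  exact mul_cos_mul_sin_sq_add_mul_cos_mul_cos_sq_lt_one hx hy p.1 p.2

lemma norm_appellF1Integrand_le (a x y : ℝ) (q : ℕ × ℕ) {p : ℝ × ℝ} (hp : p ∈ hemisphereAngles) :
    ‖appellF1Integrand a x y q p‖ ≤ appellF1Integrand |a| |x| |y| q p := by
  have hcos : 0 ≤ cos p.1 := cos_nonneg_of_mem_Icc (Ioo_subset_Icc_self hp.1)
  simp only [appellF1Integrand, norm_eq_abs, abs_mul, abs_div, abs_pow, abs_of_nonneg hcos,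
    Nat.abs_cast, mul_pow, sq_abs]
  gcongr
  exact abs_poch_le a _

lemma two_pi_mul_appellF1_eq_integral (a : ℝ) {x y : ℝ} (hx : |x| < 1) (hy : |y| < 1) :
    2 * π * appellF1 a (1 / 2) (1 / 2) (3 / 2) x y =
      ∫ p in hemisphereAngles, cos p.1 *
        (1 / (1 - (x * (cos p.1 * sin p.2) ^ 2 + y * (cos p.1 * cos p.2) ^ 2)) ^ a) := by
  have hbound_sum (p : ℝ × ℝ) :=
    hasSum_appellF1Integrand |a| (x := |x|) (y := |y|) (by rwa [abs_abs]) (by rwa [abs_abs]) p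
  have hbound_integrable :
      IntegrableOn (fun p ↦ ∑' q, appellF1Integrand |a| |x| |y| q p) hemisphereAngles := by
    simp only [(hbound_sum _).tsum_eq]
    have hbase (p : ℝ × ℝ) :=
      sub_pos.2 (mul_cos_mul_sin_sq_add_mul_cos_mul_cos_sq_lt_one hx hy p.1 p.2)
    refine integrableOn_hemisphereAngles_of_continuous ?_
    refine .mul (by fun_prop) (.div continuous_const ?_ fun p ↦ (rpow_pos_of_pos (hbase p) _).ne')
    exact .rpow_const (by fun_prop) fun p ↦ .inl (hbase p).ne'
  have hsum := hasSum_integral_of_dominated_convergence (appellF1Integrand |a| |x| |y|)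
    (fun q ↦ (integrableOn_hemisphereAngles_of_continuous
      (by unfold appellF1Integrand; fun_prop)).aestronglyMeasurable)
    (fun q ↦ (ae_restrict_mem measurableSet_hemisphereAngles).mono fun p ↦
      norm_appellF1Integrand_le a x y q)
    (ae_of_all _ fun p ↦ (hbound_sum p).summable) hbound_integrable
    (ae_of_all _ (hasSum_appellF1Integrand a hx hy))
  rw [← hsum.tsum_eq, appellF1, ← tsum_mul_left]
  exact tsum_congr fun q ↦ (integral_appellF1Integrand a x y q).symm

end AppellIntegral

section ChangeOfVariables

lemma linearMap_det_prod {R : Type*} [CommRing R] (f g : R × R →ₗ[R] R) :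
    LinearMap.det (f.prod g) = f (1, 0) * g (0, 1) - f (0, 1) * g (1, 0) := by
  rw [← LinearMap.det_toMatrix (Module.Basis.finTwoProd R), Matrix.det_fin_two]
  simp [LinearMap.toMatrix_apply]

lemma continuousLinearMap_det_prod {R : Type*} [CommRing R] [TopologicalSpace R]
    (f g : R × R →L[R] R) :
    (f.prod g).det = f (1, 0) * g (0, 1) - f (0, 1) * g (1, 0) :=
  linearMap_det_prod (f : R × R →ₗ[R] R) g

lemma setIntegral_smul_comp_eq_of_bijOn {V E : Type*} [NormedAddCommGroup V] [NormedSpace ℝ V]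
    [FiniteDimensional ℝ V] [MeasurableSpace V] [BorelSpace V] [NormedAddCommGroup E]
    [NormedSpace ℝ E] (μ : Measure V) [μ.IsAddHaarMeasure] {f : V → V} {s t : Set V} {J : V → ℝ}
    (hs : MeasurableSet s) (hf : BijOn f s t)
    (hJ : ∀ x ∈ s, ∃ L : V →L[ℝ] V, HasFDerivAt f L x ∧ |L.det| = J x) (g : V → E) :
    ∫ x in s, J x • g (f x) ∂μ = ∫ y in t, g y ∂μ := by
  choose! L hL hdet using hJ
  rw [← hf.image_eq, integral_image_eq_integral_abs_det_fderiv_smul μ hs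
    (fun x hx ↦ (hL x hx).hasFDerivWithinAt) hf.injOn g]
  exact setIntegral_congr_fun hs fun x hx ↦ by rw [hdet x hx]

variable {E : Type*} [NormedAddCommGroup E] [NormedSpace ℝ E]

/-- The central projection of the hemisphere from the origin to the plane `n₃ = 1`: it sends the
parameters of the point `n` to `(n₁ / n₃, n₂ / n₃)`. -/
noncomputable def gnomonic (p : ℝ × ℝ) : ℝ × ℝ := (tan p.1 / cos p.2, tan p.2)

lemma bijOn_gnomonic : BijOn gnomonic hemisphereAngles univ := by
  refine InvOn.bijOn (f' := fun q ↦ (arctan (q.1 * cos (arctan q.2)), arctan q.2))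
    ⟨fun p hp ↦ ?_, fun q _ ↦ ?_⟩ (mapsTo_univ _ _) fun q _ ↦
    ⟨arctan_mem_Ioo _, arctan_mem_Ioo _⟩
  · have hcos : cos p.2 ≠ 0 := (cos_pos_of_mem_Ioo hp.2).ne'
    simp [gnomonic, arctan_tan hp.1.1 hp.1.2, arctan_tan hp.2.1 hp.2.2, hcos]
  · simp [gnomonic, (cos_arctan_pos q.2).ne']

lemma exists_hasFDerivAt_gnomonic {p : ℝ × ℝ} (hp : p ∈ hemisphereAngles) :
    ∃ L, HasFDerivAt gnomonic L p ∧ |L.det| = 1 / (cos p.1 ^ 2 * cos p.2 ^ 3) := by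
  have hθ : 0 < cos p.1 := cos_pos_of_mem_Ioo hp.1
  have hφ : 0 < cos p.2 := cos_pos_of_mem_Ioo hp.2
  have htanθ := (hasDerivAt_tan hθ.ne').comp_hasFDerivAt p (hasFDerivAt_fst (𝕜 := ℝ))
  have htanφ := (hasDerivAt_tan hφ.ne').comp_hasFDerivAt p (hasFDerivAt_snd (𝕜 := ℝ))
  have hcosφ := (hasDerivAt_cos p.2).comp_hasFDerivAt p (hasFDerivAt_snd (𝕜 := ℝ))
  refine ⟨_, (htanθ.mul ((hasDerivAt_inv hφ.ne').comp_hasFDerivAt p hcosφ)).prodMk htanφ, ?_⟩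
  rw [continuousLinearMap_det_prod, ← abs_of_pos (by positivity :
    0 < 1 / (cos p.1 ^ 2 * cos p.2 ^ 3))]
  congr 1
  simp only [Function.comp_apply, neg_smul, smul_neg, neg_neg, one_div, add_apply, smul_apply,
    ContinuousLinearMap.coe_snd', smul_eq_mul, mul_zero, ContinuousLinearMap.coe_fst', mul_one,
    zero_add, add_zero, sub_zero, mul_inv_rev]
  field_simp

lemma setIntegral_smul_comp_gnomonic (g : ℝ × ℝ → E) :
    ∫ p in hemisphereAngles, (1 / (cos p.1 ^ 2 * cos p.2 ^ 3)) • g (gnomonic p) = ∫ p, g p := by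
  rw [setIntegral_smul_comp_eq_of_bijOn volume measurableSet_hemisphereAngles bijOn_gnomonic
    (fun _ ↦ exists_hasFDerivAt_gnomonic), setIntegral_univ]

/-- The support function of the ellipsoid with semi-axes `a`, `b`, `c` at `(p.1, p.2, 1)`. -/
noncomputable def ellipsoidSupport (a b c : ℝ) (p : ℝ × ℝ) : ℝ :=
  √(a ^ 2 * p.1 ^ 2 + b ^ 2 * p.2 ^ 2 + c ^ 2)

/-- The opposite of the gradient of `c * √(1 - x ^ 2 / a ^ 2 - y ^ 2 / b ^ 2)` at `q = (x, y)`, so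
that `(slope, 1)` is an upward normal of the hemiellipsoid above `q`. -/
noncomputable def hemiellipsoidSlope (a b c : ℝ) (q : ℝ × ℝ) : ℝ × ℝ :=
  (c * q.1 / (a ^ 2 * √(1 - q.1 ^ 2 / a ^ 2 - q.2 ^ 2 / b ^ 2)),
    c * q.2 / (b ^ 2 * √(1 - q.1 ^ 2 / a ^ 2 - q.2 ^ 2 / b ^ 2)))

/-- The projection to the plane of the point of the hemiellipsoid with normal `(p.1, p.2, 1)`: the
inverse Gauss map, in the coordinates of `hemiellipsoidSlope`. -/
noncomputable def hemiellipsoidPointOfSlope (a b c : ℝ) (p : ℝ × ℝ) : ℝ × ℝ :=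
  (a ^ 2 * p.1 / ellipsoidSupport a b c p, b ^ 2 * p.2 / ellipsoidSupport a b c p)

section Slope

variable {a b c : ℝ}

lemma ellipsoidSupport_pos (a b : ℝ) (hc : c ≠ 0) (p : ℝ × ℝ) : 0 < ellipsoidSupport a b c p :=
  sqrt_pos.2 (by positivity)

lemma sq_ellipsoidSupport (a b c : ℝ) (p : ℝ × ℝ) :
    ellipsoidSupport a b c p ^ 2 = a ^ 2 * p.1 ^ 2 + b ^ 2 * p.2 ^ 2 + c ^ 2 :=
  sq_sqrt (by positivity)

lemma one_sub_hemiellipsoidPointOfSlope (a b : ℝ) (hc : c ≠ 0) (p : ℝ × ℝ) :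
    1 - (hemiellipsoidPointOfSlope a b c p).1 ^ 2 / a ^ 2 -
      (hemiellipsoidPointOfSlope a b c p).2 ^ 2 / b ^ 2 = (c / ellipsoidSupport a b c p) ^ 2 := by
  have := ellipsoidSupport_pos a b hc p
  simp only [hemiellipsoidPointOfSlope]
  field_simp
  linear_combination sq_ellipsoidSupport a b c p

lemma hemiellipsoidSlope_pointOfSlope (ha : a ≠ 0) (hb : b ≠ 0) (hc : 0 < c) (p : ℝ × ℝ) :
    hemiellipsoidSlope a b c (hemiellipsoidPointOfSlope a b c p) = p := by
  have := ellipsoidSupport_pos a b hc.ne' p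
  rw [hemiellipsoidSlope, one_sub_hemiellipsoidPointOfSlope a b hc.ne', sqrt_sq (by positivity)]
  simp only [hemiellipsoidPointOfSlope]
  ext <;> field_simp

lemma ellipsoidSupport_hemiellipsoidSlope (ha : a ≠ 0) (hb : b ≠ 0) (hc : 0 ≤ c) {q : ℝ × ℝ}
    (hq : q.1 ^ 2 / a ^ 2 + q.2 ^ 2 / b ^ 2 < 1) :
    ellipsoidSupport a b c (hemiellipsoidSlope a b c q) =
      c / √(1 - q.1 ^ 2 / a ^ 2 - q.2 ^ 2 / b ^ 2) := by
  have hheight : 0 < 1 - q.1 ^ 2 / a ^ 2 - q.2 ^ 2 / b ^ 2 := by linarith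
  have hr_pos := sqrt_pos.2 hheight
  have hr_sq := sq_sqrt hheight.le
  simp only [ellipsoidSupport, hemiellipsoidSlope]
  set r := √(1 - q.1 ^ 2 / a ^ 2 - q.2 ^ 2 / b ^ 2)
  rw [← sqrt_sq (by positivity : 0 ≤ c / r)]
  congr 1
  field_simp at hr_sq ⊢
  linear_combination c ^ 2 * hr_sq

lemma hemiellipsoidPointOfSlope_slope (ha : a ≠ 0) (hb : b ≠ 0) (hc : 0 < c) {q : ℝ × ℝ}
    (hq : q.1 ^ 2 / a ^ 2 + q.2 ^ 2 / b ^ 2 < 1) :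
    hemiellipsoidPointOfSlope a b c (hemiellipsoidSlope a b c q) = q := by
  have hr_pos : 0 < √(1 - q.1 ^ 2 / a ^ 2 - q.2 ^ 2 / b ^ 2) := sqrt_pos.2 (by linarith)
  rw [hemiellipsoidPointOfSlope, ellipsoidSupport_hemiellipsoidSlope ha hb hc.le hq]
  simp only [hemiellipsoidSlope]
  generalize √(1 - q.1 ^ 2 / a ^ 2 - q.2 ^ 2 / b ^ 2) = r at hr_pos ⊢
  ext <;> field_simp

lemma bijOn_hemiellipsoidPointOfSlope (ha : a ≠ 0) (hb : b ≠ 0) (hc : 0 < c) :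
    BijOn (hemiellipsoidPointOfSlope a b c) univ
      {q : ℝ × ℝ | q.1 ^ 2 / a ^ 2 + q.2 ^ 2 / b ^ 2 < 1} := by
  refine InvOn.bijOn (f' := hemiellipsoidSlope a b c)
    ⟨fun p _ ↦ hemiellipsoidSlope_pointOfSlope ha hb hc p,
      fun q hq ↦ hemiellipsoidPointOfSlope_slope ha hb hc hq⟩ (fun p _ ↦ ?_) (mapsTo_univ _ _)
  have hheight : 0 < (c / ellipsoidSupport a b c p) ^ 2 :=
    pow_pos (div_pos hc (ellipsoidSupport_pos a b hc.ne' p)) 2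
  rw [← one_sub_hemiellipsoidPointOfSlope a b hc.ne'] at hheight
  rw [Set.mem_ofPred_eq]
  linarith

lemma hasFDerivAt_ellipsoidSupport (a b : ℝ) (hc : c ≠ 0) (p : ℝ × ℝ) :
    HasFDerivAt (ellipsoidSupport a b c) ((ellipsoidSupport a b c p)⁻¹ •
      ((a ^ 2 * p.1) • ContinuousLinearMap.fst ℝ ℝ ℝ +
        (b ^ 2 * p.2) • ContinuousLinearMap.snd ℝ ℝ ℝ)) p := by
  have hsq : HasFDerivAt (fun q : ℝ × ℝ ↦ a ^ 2 * q.1 ^ 2 + b ^ 2 * q.2 ^ 2 + c ^ 2) _ p :=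
    (((hasFDerivAt_fst (𝕜 := ℝ)).pow 2).const_mul (a ^ 2)).add
      (((hasFDerivAt_snd (𝕜 := ℝ)).pow 2).const_mul (b ^ 2)) |>.add_const (c ^ 2)
  refine (hsq.sqrt (by positivity)).congr_fderiv ?_
  change _ = (√(a ^ 2 * p.1 ^ 2 + b ^ 2 * p.2 ^ 2 + c ^ 2))⁻¹ • _
  ext <;> simp <;> ring

lemma exists_hasFDerivAt_hemiellipsoidPointOfSlope (a b : ℝ) (hc : c ≠ 0) (p : ℝ × ℝ) :
    ∃ L, HasFDerivAt (hemiellipsoidPointOfSlope a b c) L p ∧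
      |L.det| = a ^ 2 * b ^ 2 * c ^ 2 / (a ^ 2 * p.1 ^ 2 + b ^ 2 * p.2 ^ 2 + c ^ 2) ^ 2 := by
  have hH := ellipsoidSupport_pos a b hc p
  have hinv := (hasDerivAt_inv hH.ne').comp_hasFDerivAt p (hasFDerivAt_ellipsoidSupport a b hc p)
  refine ⟨_, (((hasFDerivAt_fst (𝕜 := ℝ)).const_mul (a ^ 2)).mul hinv).prodMk
    (((hasFDerivAt_snd (𝕜 := ℝ)).const_mul (b ^ 2)).mul hinv), ?_⟩
  rw [continuousLinearMap_det_prod, ← sq_ellipsoidSupport, ← abs_of_nonneg (by positivity :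
    0 ≤ a ^ 2 * b ^ 2 * c ^ 2 / (ellipsoidSupport a b c p ^ 2) ^ 2)]
  congr 1
  simp only [smul_add, neg_smul, smul_neg, Function.comp_apply, add_apply, neg_apply, smul_apply,
    ContinuousLinearMap.coe_fst', smul_eq_mul, mul_one, ContinuousLinearMap.coe_snd', mul_zero,
    neg_zero, add_zero, zero_add, mul_neg, neg_mul, neg_neg]
  field_simp
  linear_combination
    a ^ 2 * b ^ 2 * ellipsoidSupport a b c p ^ 2 * sq_ellipsoidSupport a b c p

lemma setIntegral_comp_hemiellipsoidSlope (ha : a ≠ 0) (hb : b ≠ 0) (hc : 0 < c) (g : ℝ × ℝ → E) :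
    ∫ q in {q : ℝ × ℝ | q.1 ^ 2 / a ^ 2 + q.2 ^ 2 / b ^ 2 < 1}, g (hemiellipsoidSlope a b c q) =
      ∫ p : ℝ × ℝ,
        (a ^ 2 * b ^ 2 * c ^ 2 / (a ^ 2 * p.1 ^ 2 + b ^ 2 * p.2 ^ 2 + c ^ 2) ^ 2) • g p := by
  rw [← setIntegral_smul_comp_eq_of_bijOn volume .univ (bijOn_hemiellipsoidPointOfSlope ha hb hc)
    (fun p _ ↦ exists_hasFDerivAt_hemiellipsoidPointOfSlope a b hc.ne' p), setIntegral_univ]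
  simp only [hemiellipsoidSlope_pointOfSlope ha hb hc]

end Slope

end ChangeOfVariables

section SurfaceArea

variable {a b c : ℝ}

lemma volume_ellipse_boundary_eq_zero (a : ℝ) (hb : b ≠ 0) :
    volume {q : ℝ × ℝ | q.1 ^ 2 / a ^ 2 + q.2 ^ 2 / b ^ 2 = 1} = 0 := by
  have hclosed : IsClosed {q : ℝ × ℝ | q.1 ^ 2 / a ^ 2 + q.2 ^ 2 / b ^ 2 = 1} :=
    isClosed_eq (by fun_prop) continuous_const
  refine (Measure.measure_prod_null hclosed.measurableSet).2 (.of_forall fun x ↦ ?_)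
  have hsection : Prod.mk x ⁻¹' {q : ℝ × ℝ | q.1 ^ 2 / a ^ 2 + q.2 ^ 2 / b ^ 2 = 1} ⊆
      {√((1 - x ^ 2 / a ^ 2) * b ^ 2), -√((1 - x ^ 2 / a ^ 2) * b ^ 2)} := fun y hy ↦ by
    have hy_sq : (1 - x ^ 2 / a ^ 2) * b ^ 2 = y ^ 2 := by
      rw [← eq_div_iff (pow_ne_zero 2 hb)]
      exact (eq_sub_of_add_eq' hy).symm
    rw [hy_sq, sqrt_sq_eq_abs]
    exact eq_or_eq_neg_of_abs_eq rfl
  exact ((Set.toFinite _).subset hsection).measure_zero volume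

lemma closedEllipse_ae_eq_openEllipse (a : ℝ) (hb : b ≠ 0) :
    {q : ℝ × ℝ | q.1 ^ 2 / a ^ 2 + q.2 ^ 2 / b ^ 2 ≤ 1} =ᵐ[volume]
      {q : ℝ × ℝ | q.1 ^ 2 / a ^ 2 + q.2 ^ 2 / b ^ 2 < 1} := by
  filter_upwards [measure_eq_zero_iff_ae_notMem.1 (volume_ellipse_boundary_eq_zero a hb)] with q hq
  exact propext ⟨fun hle ↦ lt_of_le_of_ne hle hq, le_of_lt⟩

lemma one_add_sq_gnomonic {p : ℝ × ℝ} (hp : p ∈ hemisphereAngles) :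
    1 + (gnomonic p).1 ^ 2 + (gnomonic p).2 ^ 2 = (1 / (cos p.1 * cos p.2)) ^ 2 := by
  have hθ : 0 < cos p.1 := cos_pos_of_mem_Ioo hp.1
  have hφ : 0 < cos p.2 := cos_pos_of_mem_Ioo hp.2
  simp only [gnomonic, tan_eq_sin_div_cos]
  field_simp
  linear_combination sin_sq_add_cos_sq p.1 + cos p.1 ^ 2 * sin_sq_add_cos_sq p.2

lemma setIntegral_sqrt_one_add_sq_hemiellipsoidSlope (ha : a ≠ 0) (hb : b ≠ 0) (hc : 0 < c) :
    ∫ q in {q : ℝ × ℝ | q.1 ^ 2 / a ^ 2 + q.2 ^ 2 / b ^ 2 ≤ 1},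
        √(1 + (hemiellipsoidSlope a b c q).1 ^ 2 + (hemiellipsoidSlope a b c q).2 ^ 2) =
      ∫ p in hemisphereAngles, cos p.1 * (a ^ 2 * b ^ 2 * c ^ 2 /
        (a ^ 2 * sin p.1 ^ 2 + b ^ 2 * (cos p.1 * sin p.2) ^ 2 +
          c ^ 2 * (cos p.1 * cos p.2) ^ 2) ^ 2) := by
  rw [setIntegral_congr_set (closedEllipse_ae_eq_openEllipse a hb),
    setIntegral_comp_hemiellipsoidSlope ha hb hc fun p ↦ √(1 + p.1 ^ 2 + p.2 ^ 2),
    ← setIntegral_smul_comp_gnomonic]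
  refine setIntegral_congr_fun measurableSet_hemisphereAngles fun p hp ↦ ?_
  have hθ : 0 < cos p.1 := cos_pos_of_mem_Ioo hp.1
  have hφ : 0 < cos p.2 := cos_pos_of_mem_Ioo hp.2
  have hdenom : a ^ 2 * (gnomonic p).1 ^ 2 + b ^ 2 * (gnomonic p).2 ^ 2 + c ^ 2 =
      (a ^ 2 * sin p.1 ^ 2 + b ^ 2 * (cos p.1 * sin p.2) ^ 2 + c ^ 2 * (cos p.1 * cos p.2) ^ 2) /
        (cos p.1 * cos p.2) ^ 2 := by
    simp only [gnomonic, tan_eq_sin_div_cos]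
    field_simp
  simp only [one_add_sq_gnomonic hp, hdenom, smul_eq_mul]
  rw [sqrt_sq (by positivity)]
  field_simp

lemma ellipsoid_quadratic_form_eq (ha : a ≠ 0) (b c θ φ : ℝ) :
    a ^ 2 * sin θ ^ 2 + b ^ 2 * (cos θ * sin φ) ^ 2 + c ^ 2 * (cos θ * cos φ) ^ 2 =
      a ^ 2 * (1 - ((1 - b ^ 2 / a ^ 2) * (cos θ * sin φ) ^ 2 +
        (1 - c ^ 2 / a ^ 2) * (cos θ * cos φ) ^ 2)) := by
  field_simp
  linear_combination a ^ 2 * sin_sq_add_cos_sq θ + a ^ 2 * cos θ ^ 2 * sin_sq_add_cos_sq φ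

lemma abs_one_sub_sq_div_sq_lt_one (hb : b ≠ 0) (hba : b ^ 2 < 2 * a ^ 2) :
    |1 - b ^ 2 / a ^ 2| < 1 := by
  have ha : 0 < a ^ 2 := by nlinarith [sq_nonneg b]
  have hlt : b ^ 2 / a ^ 2 < 2 := (div_lt_iff₀ ha).2 hba
  have hpos : 0 < b ^ 2 / a ^ 2 := by positivity
  exact abs_lt.2 ⟨by linarith, by linarith⟩

theorem hemiellipsoid_surface_area_general (hb : b ≠ 0) (hc : 0 < c)
    (hba : b ^ 2 < 2 * a ^ 2) (hca : c ^ 2 < 2 * a ^ 2) :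
    ∫ p in {q : ℝ × ℝ | q.1 ^ 2 / a ^ 2 + q.2 ^ 2 / b ^ 2 ≤ 1},
        √(1 + (c * p.1 / (a ^ 2 * √(1 - p.1 ^ 2 / a ^ 2 - p.2 ^ 2 / b ^ 2))) ^ 2 +
          (c * p.2 / (b ^ 2 * √(1 - p.1 ^ 2 / a ^ 2 - p.2 ^ 2 / b ^ 2))) ^ 2) =
      (2 * π * b ^ 2 * c ^ 2 / a ^ 2) *
        appellF1 2 (1 / 2) (1 / 2) (3 / 2) (1 - b ^ 2 / a ^ 2) (1 - c ^ 2 / a ^ 2) := by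
  have ha : a ≠ 0 := by
    rintro rfl
    nlinarith [sq_nonneg b]
  calc _ = _ := setIntegral_sqrt_one_add_sq_hemiellipsoidSlope ha hb hc
    _ = b ^ 2 * c ^ 2 / a ^ 2 * ∫ p in hemisphereAngles, cos p.1 *
          (1 / (1 - ((1 - b ^ 2 / a ^ 2) * (cos p.1 * sin p.2) ^ 2 +
            (1 - c ^ 2 / a ^ 2) * (cos p.1 * cos p.2) ^ 2)) ^ (2 : ℝ)) := by
      rw [← integral_const_mul]
      congr! 2
      rw [ellipsoid_quadratic_form_eq ha, rpow_two, mul_pow, ← div_div]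
      field_simp
    _ = b ^ 2 * c ^ 2 / a ^ 2 * (2 * π * appellF1 2 (1 / 2) (1 / 2) (3 / 2) _ _) := by
      rw [two_pi_mul_appellF1_eq_integral 2 (abs_one_sub_sq_div_sq_lt_one hb hba)
        (abs_one_sub_sq_div_sq_lt_one hc.ne' hca)]
    _ = _ := by ring

end SurfaceArea

/-- For `a ≥ b ≥ c > 0`, the surface area of the hemiellipsoid
`z = c√(1 − x²/a² − y²/b²)` equals
`(2πb²c²/a²) F₁(2; 1/2, 1/2; 3/2; 1 − b²/a², 1 − c²/a²)`. -/
theorem hemiellipsoid_surface_area (a b c : ℝ) (hab : a ≥ b) (hbc : b ≥ c)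
    (hc : 0 < c) :
    ∫ p in {q : ℝ × ℝ | q.1 ^ 2 / a ^ 2 + q.2 ^ 2 / b ^ 2 ≤ 1},
        Real.sqrt (1 +
          (c * p.1 / (a ^ 2 * Real.sqrt (1 - p.1 ^ 2 / a ^ 2 - p.2 ^ 2 / b ^ 2))) ^ 2 +
          (c * p.2 / (b ^ 2 * Real.sqrt (1 - p.1 ^ 2 / a ^ 2 - p.2 ^ 2 / b ^ 2))) ^ 2)
      = (2 * π * b ^ 2 * c ^ 2 / a ^ 2) *
          appellF1 2 (1 / 2) (1 / 2) (3 / 2) (1 - b ^ 2 / a ^ 2) (1 - c ^ 2 / a ^ 2) := by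
  have hb : 0 < b := hc.trans_le hbc
  exact hemiellipsoid_surface_area_general hb.ne' hc
    (by nlinarith) (by nlinarith)
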